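/- Let m ≥ 1 and let T : {1,…,m+1}³ → ℝ be a 3-tensor that is symmetric in its first two arguments, T(a,b,c) = T(b,a,c). Define S_c := (1/(m+1)) Σ_{a=1}^{m+1} T(a,a,c), and assume the contracted Bianchi-type identity Σ_{a=1}^{m+1} T(a,c,a) = ((m+1)/2)·S_c holds for every c. Then for every index 1 ≤ i ≤ m+1, ∫_{S^m} ( (1/4) Σ_{a,b,c} T(a,b,c) x_a x_b x_c − ((m+1)/(2(m+3))) Σ_{a} S_a x_a ) · x_i dσ(x) = 0. In particular, the L²(S^m)-orthogonal projection of the function x ↦ (1/4)Σ T(a,b,c)x_a x_b x_c − ((m+1)/(2(m+3)))Σ S_a x_a onto the span of the coordinate functions x_1, …, x_{m+1} vanishes. (Applied with T(a,b,c) = Ric_{ab;c}, the normalized covariant derivative of the Ricci tensor, whose trace is S_c = S_{;c} and which satisfies the contracted second Bianchi identity, this is the vanishing of the projection Π((1/4)Ric_{pq;r}x^p x^q x^r − ((m+1)/(2(m+3)))S_{;p}x^p) = 0.) -/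

import Mathlib

open MeasureTheory

/-!
For a measure invariant under all linear isometries, `∫ ⟪v, x⟫⁴` depends only on `‖v‖`, since any
two vectors of equal norm are exchanged by a reflection; it therefore equals `K * ‖v‖⁴`. Polarizing
both sides, the fourth moment tensor is a multiple of `δ_ab δ_cd + δ_ac δ_bd + δ_ad δ_bc`. Hence the
integral of a cubic form against a coordinate sees only the three traces of its coefficients. For
`(1/4) T(x,x,x) - (n / (2 (n + 2))) ‖x‖² S(x)` in dimension `n` these traces add up to
`(1/4) (n + n/2 + n/2) S - (n / (2 (n + 2))) (n + 2) S = 0`.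

Integrability holds on the sphere because its surface measure is finite: the sphere is the union of
two hemispheres, each covered by the image of a compact ball under an inverse stereographic
projection.
-/

open Metric Module
open scoped RealInnerProductSpace

section Polarization

theorem sum_units_mul_pow_four {R : Type*} [CommRing R] (a b c d : R) :
    ∑ ε : ℤˣ × ℤˣ × ℤˣ, (ε.1 * ε.2.1 * ε.2.2 : R) *
      (a + ε.1 * b + ε.2.1 * c + ε.2.2 * d) ^ 4 = 192 * (a * b * c * d) := by
  simp only [Fintype.sum_prod_type, UnitsInt.univ, Finset.sum_pair (show (1 : ℤˣ) ≠ -1 by decide),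
    Units.val_one, Units.val_neg, Int.cast_one, Int.cast_neg]
  ring

theorem sum_units_mul_norm_pow_four {E : Type*} [NormedAddCommGroup E] [InnerProductSpace ℝ E]
    (u v w z : E) :
    ∑ ε : ℤˣ × ℤˣ × ℤˣ, (ε.1 * ε.2.1 * ε.2.2 : ℝ) *
      ‖u + (ε.1 : ℝ) • v + (ε.2.1 : ℝ) • w + (ε.2.2 : ℝ) • z‖ ^ 4 =
      64 * (⟪u, v⟫ * ⟪w, z⟫ + ⟪u, w⟫ * ⟪v, z⟫ + ⟪u, z⟫ * ⟪v, w⟫) := by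
  have norm_pow_four (y : E) : ‖y‖ ^ 4 = ⟪y, y⟫ ^ 2 := by
    rw [real_inner_self_eq_norm_sq, ← pow_mul]
  simp only [Fintype.sum_prod_type, UnitsInt.univ, Finset.sum_pair (show (1 : ℤˣ) ≠ -1 by decide),
    Units.val_one, Units.val_neg, Int.cast_one, Int.cast_neg, norm_pow_four, inner_add_left,
    inner_add_right, real_inner_smul_left, real_inner_smul_right, real_inner_comm u,
    real_inner_comm v w, real_inner_comm v z, real_inner_comm w z]
  ring

end Polarization

section Isotropic

variable {E : Type*} [NormedAddCommGroup E] [InnerProductSpace ℝ E] [MeasurableSpace E]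

/-- A measure on an inner product space is isotropic if every surjective linear isometry preserves
it. -/
def IsIsotropic (μ : Measure E) : Prop :=
  ∀ e : E ≃ₗᵢ[ℝ] E, MeasurePreserving e μ μ

variable [BorelSpace E] {μ : Measure E}

theorem isIsotropic_hausdorffMeasure_restrict_sphere (d r : ℝ) :
    IsIsotropic (μH[d].restrict (sphere (0 : E) r)) := by
  intro e
  have h := (e.toIsometryEquiv.measurePreserving_hausdorffMeasure d).restrict_preimage
    (s := sphere 0 r) isClosed_sphere.measurableSet
  simpa [IsometryEquiv.preimage_sphere] using h

theorem integrable_inner_mul_inner_mul_inner_mul_inner (hμ : Integrable (fun x : E ↦ ‖x‖ ^ 4) μ)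
    (u v w z : E) : Integrable (fun x ↦ ⟪u, x⟫ * ⟪v, x⟫ * ⟪w, x⟫ * ⟪z, x⟫) μ := by
  refine (hμ.const_mul (‖u‖ * ‖v‖ * ‖w‖ * ‖z‖)).mono'
    (Continuous.aestronglyMeasurable (by fun_prop)) (.of_forall fun x ↦ ?_)
  calc ‖⟪u, x⟫ * ⟪v, x⟫ * ⟪w, x⟫ * ⟪z, x⟫‖
    _ = ‖⟪u, x⟫‖ * ‖⟪v, x⟫‖ * ‖⟪w, x⟫‖ * ‖⟪z, x⟫‖ := by simp only [norm_mul]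
    _ ≤ (‖u‖ * ‖x‖) * (‖v‖ * ‖x‖) * (‖w‖ * ‖x‖) * (‖z‖ * ‖x‖) := by
      gcongr <;> exact norm_inner_le_norm _ _
    _ = ‖u‖ * ‖v‖ * ‖w‖ * ‖z‖ * ‖x‖ ^ 4 := by ring

theorem IsIsotropic.integral_comp_inner_eq_of_norm_eq (hμ : IsIsotropic μ) (f : ℝ → ℝ) {v w : E}
    (h : ‖v‖ = ‖w‖) : ∫ x, f ⟪v, x⟫ ∂μ = ∫ x, f ⟪w, x⟫ ∂μ := by
  let e := (ℝ ∙ (v - w))ᗮ.reflection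
  have hev : e v = w := Submodule.reflection_sub h
  calc ∫ x, f ⟪v, x⟫ ∂μ
    _ = ∫ x, f ⟪w, e x⟫ ∂μ := by simp only [← hev, e.inner_map_map]
    _ = ∫ x, f ⟪w, x⟫ ∂μ :=
      (hμ e).integral_comp e.toHomeomorph.measurableEmbedding (fun x ↦ f ⟪w, x⟫)

theorem IsIsotropic.exists_integral_inner_pow_eq (hμ : IsIsotropic μ) {k : ℕ} (hk : k ≠ 0) :
    ∃ K : ℝ, ∀ v, ∫ x, ⟪v, x⟫ ^ k ∂μ = K * ‖v‖ ^ k := by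
  rcases subsingleton_or_nontrivial E with _ | _
  · exact ⟨0, fun v ↦ by simp [Subsingleton.elim v 0, hk]⟩
  obtain ⟨e, he⟩ := exists_norm_eq E zero_le_one
  refine ⟨∫ x, ⟪e, x⟫ ^ k ∂μ, fun v ↦ ?_⟩
  have hv : ‖v‖ = ‖‖v‖ • e‖ := by rw [norm_smul, norm_norm, he, mul_one]
  rw [hμ.integral_comp_inner_eq_of_norm_eq (· ^ k) hv]
  simp only [real_inner_smul_left, mul_pow, integral_const_mul]
  exact mul_comm _ _

theorem IsIsotropic.exists_integral_inner_mul_inner_mul_inner_mul_inner_eq (hμ : IsIsotropic μ)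
    (hμ4 : Integrable (fun x : E ↦ ‖x‖ ^ 4) μ) :
    ∃ B : ℝ, ∀ u v w z : E, ∫ x, ⟪u, x⟫ * ⟪v, x⟫ * ⟪w, x⟫ * ⟪z, x⟫ ∂μ =
      B * (⟪u, v⟫ * ⟪w, z⟫ + ⟪u, w⟫ * ⟪v, z⟫ + ⟪u, z⟫ * ⟪v, w⟫) := by
  obtain ⟨K, hK⟩ := hμ.exists_integral_inner_pow_eq four_ne_zero
  refine ⟨K / 3, fun u v w z ↦ ?_⟩
  have integrable_pow (y : E) : Integrable (fun x ↦ ⟪y, x⟫ ^ 4) μ := by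
    simpa only [pow_succ, pow_zero, one_mul] using
      integrable_inner_mul_inner_mul_inner_mul_inner hμ4 y y y y
  have polarized : 192 * ∫ x, ⟪u, x⟫ * ⟪v, x⟫ * ⟪w, x⟫ * ⟪z, x⟫ ∂μ =
      K * (64 * (⟪u, v⟫ * ⟪w, z⟫ + ⟪u, w⟫ * ⟪v, z⟫ + ⟪u, z⟫ * ⟪v, w⟫)) := by
    rw [← sum_units_mul_norm_pow_four, Finset.mul_sum, ← integral_const_mul]
    simp_rw [← sum_units_mul_pow_four]
    simp only [← real_inner_smul_left _ _ (Int.cast _), ← inner_add_left]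
    rw [integral_finsetSum _ fun ε _ ↦ (integrable_pow _).const_mul _]
    exact Finset.sum_congr rfl fun ε _ ↦ by rw [integral_const_mul, hK]; ring
  linarith

end Isotropic

section Coordinates

variable {ι : Type*} [Fintype ι]

theorem sum_ite_mul_eq_norm_sq_mul_sum [DecidableEq ι] (S : ι → ℝ) (x : EuclideanSpace ℝ ι) :
    ∑ a, ∑ b, ∑ c, (if a = b then S c else 0) * x a * x b * x c = ‖x‖ ^ 2 * ∑ a, S a * x a := by
  rw [EuclideanSpace.real_norm_sq_eq, Finset.sum_mul_sum]
  refine Finset.sum_congr rfl fun a _ ↦ ?_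
  simp [mul_assoc, mul_left_comm, pow_two]

theorem IsIsotropic.exists_integral_cubic_mul_coord_eq
    {μ : Measure (EuclideanSpace ℝ ι)} (hμ : IsIsotropic μ)
    (hμ4 : Integrable (fun x ↦ ‖x‖ ^ 4) μ) :
    ∃ B : ℝ, ∀ (T : ι → ι → ι → ℝ) (i : ι),
      ∫ x, (∑ a, ∑ b, ∑ c, T a b c * x a * x b * x c) * x i ∂μ =
        B * (∑ a, T a a i + ∑ a, T a i a + ∑ a, T i a a) := by
  classical
  obtain ⟨B, hB⟩ := hμ.exists_integral_inner_mul_inner_mul_inner_mul_inner_eq hμ4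
  refine ⟨B, fun T i ↦ ?_⟩
  let e (a : ι) : EuclideanSpace ℝ ι := EuclideanSpace.single a 1
  have inner_e (a : ι) (x : EuclideanSpace ℝ ι) : ⟪e a, x⟫ = x a := by
    simp [e, EuclideanSpace.inner_single_left]
  have integrable_coords (a b c : ι) :
      Integrable (fun x ↦ T a b c * (x a * x b * x c * x i)) μ := by
    simpa only [inner_e] using (integrable_inner_mul_inner_mul_inner_mul_inner hμ4
      (e a) (e b) (e c) (e i)).const_mul (T a b c)
  have integral_coords (a b c : ι) : ∫ x, x a * x b * x c * x i ∂μ =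
      B * (e b a * e i c + e c a * e i b + e i a * e c b) := by
    simpa only [inner_e] using hB (e a) (e b) (e c) (e i)
  calc ∫ x, (∑ a, ∑ b, ∑ c, T a b c * x a * x b * x c) * x i ∂μ
    _ = ∫ x, ∑ a, ∑ b, ∑ c, T a b c * (x a * x b * x c * x i) ∂μ := by
      simp only [Finset.sum_mul, mul_assoc]
    _ = ∑ a, ∑ b, ∑ c, T a b c * (B * (e b a * e i c + e c a * e i b + e i a * e c b)) := by
      simp only [← Fintype.sum_prod_type']
      rw [integral_finsetSum _ fun p _ ↦ integrable_coords p.1 p.2.1 p.2.2]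
      simp only [integral_const_mul, integral_coords]
    _ = B * (∑ a, T a a i + ∑ a, T a i a + ∑ a, T i a a) := by
      simp [e, mul_add, Finset.sum_add_distrib, Finset.mul_sum, mul_comm]

end Coordinates

section Sphere

theorem hausdorffMeasure_finrank_image_lt_top {F E : Type*} [NormedAddCommGroup F]
    [NormedSpace ℝ F] [FiniteDimensional ℝ F] [MetricSpace E] [MeasurableSpace E]
    [BorelSpace E] {f : F → E} (hf : LocallyLipschitz f) {K : Set F} (hK : IsCompact K) :
    μH[finrank ℝ F] (f '' K) < ⊤ := by
  borelize F
  obtain ⟨C, hC⟩ := hf.locallyLipschitzOn.exists_lipschitzOnWith_of_compact hK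
  refine (hC.hausdorffMeasure_image_le (Nat.cast_nonneg _)).trans_lt (ENNReal.mul_lt_top ?_ ?_)
  · exact ENNReal.rpow_lt_top_of_nonneg (Nat.cast_nonneg _) ENNReal.coe_ne_top
  · exact hK.measure_lt_top

variable {E : Type*} [NormedAddCommGroup E] [InnerProductSpace ℝ E]

theorem hemisphere_subset_image_stereoInvFunAux {v : E} (hv : ‖v‖ = 1) :
    {x ∈ sphere (0 : E) 1 | ⟪v, x⟫ ≤ 0} ⊆
      (fun w : (ℝ ∙ v)ᗮ ↦ stereoInvFunAux v w) '' closedBall 0 2 := by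
  rintro x ⟨hx, hvx⟩
  have hx_ne : x ≠ v := by
    rintro rfl
    norm_num [hv] at hvx
  refine ⟨stereoToFun v x, ?_, congrArg Subtype.val (stereo_left_inv hv (x := ⟨x, hx⟩) hx_ne)⟩
  have projection_le : ‖(ℝ ∙ v)ᗮ.orthogonalProjectionOnto x‖ ≤ 1 :=
    ((ℝ ∙ v)ᗮ.norm_orthogonalProjectionOnto_apply_le x).trans_eq (mem_sphere_zero_iff_norm.1 hx)
  have factor_le : ‖2 / (1 - ⟪v, x⟫)‖ ≤ 2 := by
    rw [Real.norm_of_nonneg (div_nonneg zero_le_two (by linarith))]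
    exact div_le_self zero_le_two (by linarith)
  rw [mem_closedBall_zero_iff, stereoToFun_apply, innerSL_apply_apply, norm_smul]
  exact (mul_le_mul factor_le projection_le (norm_nonneg _) zero_le_two).trans_eq (mul_one 2)

variable [MeasurableSpace E] [BorelSpace E] {n : ℕ} [Fact (finrank ℝ E = n + 1)]

theorem hausdorffMeasure_sphere_lt_top : μH[n] (sphere (0 : E) 1) < ⊤ := by
  have : FiniteDimensional ℝ E := .of_fact_finrank_eq_succ n
  have : Nontrivial E := nontrivial_of_finrank_eq_succ (Fact.out : finrank ℝ E = n + 1)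
  have hemisphere_lt_top {v : E} (hv : ‖v‖ = 1) :
      μH[n] {x ∈ sphere (0 : E) 1 | ⟪v, x⟫ ≤ 0} < ⊤ := by
    refine (measure_mono (hemisphere_subset_image_stereoInvFunAux hv)).trans_lt ?_
    have hv0 : v ≠ 0 := ne_zero_of_norm_ne_zero (by simp [hv])
    rw [← Submodule.finrank_orthogonal_span_singleton (𝕜 := ℝ) (n := n) hv0]
    exact hausdorffMeasure_finrank_image_lt_top (contDiff_stereoInvFunAux.comp
      (ℝ ∙ v)ᗮ.subtypeL.contDiff).locallyLipschitz (isCompact_closedBall _ _)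
  obtain ⟨v, hv⟩ := exists_norm_eq E zero_le_one
  have sphere_subset : sphere (0 : E) 1 ⊆
      {x ∈ sphere 0 1 | ⟪v, x⟫ ≤ 0} ∪ {x ∈ sphere 0 1 | ⟪-v, x⟫ ≤ 0} := fun x hx ↦
    (le_total ⟪v, x⟫ 0).imp (⟨hx, ·⟩) fun h ↦ ⟨hx, by simpa using h⟩
  exact (measure_mono sphere_subset).trans_lt <|
    measure_union_lt_top (hemisphere_lt_top hv) (hemisphere_lt_top (by rwa [norm_neg]))

theorem integrableOn_sphere_norm_pow (k : ℕ) :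
    IntegrableOn (fun x : E ↦ ‖x‖ ^ k) (sphere 0 1) μH[n] :=
  (integrableOn_const (C := (1 : ℝ)) hausdorffMeasure_sphere_lt_top.ne).congr_fun
    (fun x hx ↦ by simp [mem_sphere_zero_iff_norm.1 hx]) isClosed_sphere.measurableSet

end Sphere

theorem stmt_14_general {ι : Type*} [Fintype ι] {μ : Measure (EuclideanSpace ℝ ι)}
    (hμ : IsIsotropic μ) (hμ4 : Integrable (fun x ↦ ‖x‖ ^ 4) μ) {n : ℝ} (hn : n = Fintype.card ι)
    (T : ι → ι → ι → ℝ) (hsymT : ∀ a b c, T a b c = T b a c)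
    (S : ι → ℝ) (hS : ∀ c, S c = (1 / n) * ∑ a, T a a c)
    (hBianchi : ∀ c, ∑ a, T a c a = (n / 2) * S c) (i : ι) :
    ∫ x, ((1 / 4) * (∑ a, ∑ b, ∑ c, T a b c * x a * x b * x c) -
      (n / (2 * (n + 2))) * (‖x‖ ^ 2 * ∑ a, S a * x a)) * x i ∂μ = 0 := by
  classical
  obtain ⟨B, hB⟩ := hμ.exists_integral_cubic_mul_coord_eq hμ4
  have hn_pos : 0 < n := by
    rw [hn]
    exact_mod_cast Fintype.card_pos_iff.2 ⟨i⟩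
  set k := n / (2 * (n + 2)) with hk
  let R (a b c : ι) : ℝ := (1 / 4) * T a b c - k * (if a = b then S c else 0)
  have integrand_eq (x : EuclideanSpace ℝ ι) :
      (1 / 4) * (∑ a, ∑ b, ∑ c, T a b c * x a * x b * x c) - k * (‖x‖ ^ 2 * ∑ a, S a * x a) =
        ∑ a, ∑ b, ∑ c, R a b c * x a * x b * x c := by
    rw [← sum_ite_mul_eq_norm_sq_mul_sum]
    simp only [R, sub_mul, Finset.sum_sub_distrib, Finset.mul_sum, mul_assoc]
  have trace_left : ∑ a, T a a i = n * S i := by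
    rw [hS]
    field_simp
  have trace_right : ∑ a, T i a a = n / 2 * S i := by
    simpa only [hsymT i] using hBianchi i
  have traces_R : ∑ a, R a a i + ∑ a, R a i a + ∑ a, R i a a =
      (1 / 4) * (∑ a, T a a i + ∑ a, T a i a + ∑ a, T i a a) - k * (n + 2) * S i := by
    simp only [R, Finset.sum_sub_distrib, ← Finset.mul_sum, ↓reduceIte, Finset.sum_const,
      Finset.card_univ, nsmul_eq_mul, ← hn, Finset.sum_ite_eq, Finset.sum_ite_eq', Finset.mem_univ]
    ring
  simp only [integrand_eq, hB, traces_R, trace_left, trace_right, hBianchi]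
  rw [hk]
  field_simp
  ring

/-- Let `T` be a 3-tensor on `ℝ^{m+1}` symmetric in its first two arguments, with trace
`S_c = (1/(m+1)) Σ_a T(a,a,c)`, satisfying the contracted Bianchi-type identity
`Σ_a T(a,c,a) = ((m+1)/2) S_c`.  Then for every coordinate index `i`,
`∫_{S^m} ((1/4) Σ_{a,b,c} T(a,b,c) x_a x_b x_c − ((m+1)/(2(m+3))) Σ_a S_a x_a) x_i dσ = 0`,
where `σ` is the `m`-dimensional Hausdorff (surface) measure on `S^m ⊆ ℝ^{m+1}`; i.e. the
`L²`-projection onto the span of the coordinate functions vanishes. -/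
theorem stmt_14 (m : ℕ) (hm : 1 ≤ m)
    (T : Fin (m + 1) → Fin (m + 1) → Fin (m + 1) → ℝ)
    (hsymT : ∀ a b c, T a b c = T b a c)
    (S : Fin (m + 1) → ℝ)
    (hS : ∀ c, S c = (1 / ((m : ℝ) + 1)) * ∑ a, T a a c)
    (hBianchi : ∀ c, ∑ a, T a c a = (((m : ℝ) + 1) / 2) * S c)
    (i : Fin (m + 1)) :
    ∫ x in Metric.sphere (0 : EuclideanSpace ℝ (Fin (m + 1))) 1,
        ((1 / 4) * (∑ a, ∑ b, ∑ c, T a b c * x a * x b * x c) -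
            (((m : ℝ) + 1) / (2 * ((m : ℝ) + 3))) * ∑ a, S a * x a) * x i ∂(μH[(m : ℝ)]) = 0 := by
  have : Fact (Module.finrank ℝ (EuclideanSpace ℝ (Fin (m + 1))) = m + 1) := ⟨by simp⟩
  have hcard : (m : ℝ) + 1 = Fintype.card (Fin (m + 1)) := by simp
  rw [← stmt_14_general (isIsotropic_hausdorffMeasure_restrict_sphere m 1)
    (integrableOn_sphere_norm_pow (n := m) 4) hcard T hsymT S hS hBianchi i]
  refine setIntegral_congr_fun isClosed_sphere.measurableSet fun x hx ↦ ?_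
  simp only [mem_sphere_zero_iff_norm.1 hx]
  ring
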